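/- arXiv:2204.01113 — 6 statements merged into one kernel-verified Lean document; each statement's English description precedes it below -/
import Mathlib

section
/- Normalization and unbiasedness of the Monte Carlo path estimator (core identities in the proof of Lemma 2.2): Let N ≥ 1, L ≥ 1. Let Φ : Fin N → ℂ satisfy ∑_x |Φ(x)|² = 1 and Φ(x) ≠ 0 for all x. For each l ∈ {1,…,L} let G_l be a real symmetric N×N matrix with nonnegative entries, let φ_l : Fin N → ℝ be entrywise strictly positive, and let λ_l > 0 satisfy G_l φ_l = λ_l φ_l. For a path x⃗ = (x_0,…,x_L) ∈ (Fin N)^{L+1} define Π(x⃗) = |Φ(x_0)|² ∏_{l=1}^L [G_l(x_{l−1},x_l) φ_l(x_l) / (λ_l φ_l(x_{l−1}))] and R(x⃗) = (Φ(x_L)/Φ(x_0)) ∏_{l=1}^L [λ_l φ_l(x_{l−1})/φ_l(x_l)]. Then (i) ∑_{x⃗} Π(x⃗) = 1, and (ii) ∑_{x⃗} Π(x⃗) R(x⃗) = ⟨Φ, G_1 G_2 ⋯ G_L Φ⟩, where the real matrices G_l act on ℂ^N by entrywise complexification. -/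
open scoped BigOperators ComplexConjugate
open Matrix

/-!
Summing a product of matrix entries over all paths gives a matrix product, so both sums are matrix
expressions. For the first, the step weights `G x y φ y / (λ φ x)` are the Doob transform of `G` by
its eigenvector `φ`; their rows sum to one, so the total mass is that of the initial weight. For
the second, the reweighting factor undoes each Doob transform and turns the initial weight `‖Φ‖ ^ 2`
into `conj Φ`, leaving the path expansion of `⟨Φ, G₁ ⋯ G_L Φ⟩`.
-/

section

variable {n : Type*} {L : ℕ}

/-- The weight of the path `x₀, …, x_L` under the step matrices `M₁, …, M_L`: the product of the
entries `M_l (x_{l-1}, x_l)`. Steps are indexed by `Fin L`, so the `l`-th step goes from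
`xs l.castSucc` to `xs l.succ`. -/
def pathWeight {R : Type*} [CommMonoid R] (M : Fin L → Matrix n n R) (xs : Fin (L + 1) → n) : R :=
  ∏ l, M l (xs l.castSucc) (xs l.succ)

theorem pathWeight_cons {R : Type*} [CommMonoid R] (M : Fin (L + 1) → Matrix n n R)
    (y : n) (ys : Fin (L + 1) → n) :
    pathWeight M (Fin.cons y ys : Fin (L + 2) → n) =
      M 0 y (ys 0) * pathWeight (fun l => M l.succ) ys := by
  rw [pathWeight, Fin.prod_univ_succ]
  rfl

theorem list_prod_mulVec_eq_self {R : Type*} [Semiring R] [Fintype n] [DecidableEq n]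
    {Ms : List (Matrix n n R)} {v : n → R} (h : ∀ M ∈ Ms, M *ᵥ v = v) : Ms.prod *ᵥ v = v :=
  List.prod_induction (· *ᵥ v = v) (fun A B hA hB => by rw [← mulVec_mulVec, hB, hA])
    (one_mulVec v) h

section CommSemiring

variable {R : Type*} [CommSemiring R] [Fintype n]

theorem sum_mul_pathWeight_mul [DecidableEq n] (M : Fin L → Matrix n n R) (f g : n → R) :
    ∑ xs, f (xs 0) * pathWeight M xs * g (xs (Fin.last L)) =
      f ⬝ᵥ ((List.ofFn M).prod *ᵥ g) := by
  induction L generalizing f with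
  | zero =>
    rw [← (Equiv.funUnique (Fin 1) n).symm.sum_comp]
    simp [dotProduct, pathWeight]
  | succ L ih =>
    calc ∑ xs, f (xs 0) * pathWeight M xs * g (xs (Fin.last (L + 1)))
        = ∑ y, ∑ ys : Fin (L + 1) → n,
            f y * (M 0 y (ys 0) * pathWeight (fun l => M l.succ) ys) * g (ys (Fin.last L)) := by
          rw [← (Fin.consEquiv fun _ => n).sum_comp, Fintype.sum_prod_type]
          simp only [← pathWeight_cons]
          rfl
      _ = ∑ ys : Fin (L + 1) → n,
            (f ᵥ* M 0) (ys 0) * pathWeight (fun l => M l.succ) ys * g (ys (Fin.last L)) := by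
          rw [Finset.sum_comm]
          simp only [vecMul, dotProduct, Finset.sum_mul, mul_assoc]
      _ = f ⬝ᵥ ((List.ofFn M).prod *ᵥ g) := by
          rw [ih, ← dotProduct_mulVec, mulVec_mulVec, List.ofFn_succ, List.prod_cons]

theorem sum_mul_pathWeight_of_mulVec_one {M : Fin L → Matrix n n R} (hM : ∀ l, M l *ᵥ 1 = 1)
    (f : n → R) : ∑ xs, f (xs 0) * pathWeight M xs = ∑ x, f x := by
  classical
  have hprod : (List.ofFn M).prod *ᵥ 1 = 1 :=
    list_prod_mulVec_eq_self (List.forall_mem_ofFn_iff.mpr hM)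
  simpa [hprod, dotProduct_one] using sum_mul_pathWeight_mul M f 1

end CommSemiring

section Semifield

variable {K : Type*} [Semifield K]

/-- The Doob transform (`h`-transform) of `A` by the vector `h` at the value `c`: the matrix
`c⁻¹ D⁻¹ A D` with `D` the diagonal matrix of `h`. -/
def doobTransform (A : Matrix n n K) (h : n → K) (c : K) : Matrix n n K :=
  of fun x y => A x y * h y / (c * h x)

theorem doobTransform_mulVec_one [Fintype n] {A : Matrix n n K} {h : n → K} {c : K}
    (hc : c ≠ 0) (hh : ∀ x, h x ≠ 0) (hA : A *ᵥ h = c • h) : doobTransform A h c *ᵥ 1 = 1 := by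
  ext x
  calc (doobTransform A h c *ᵥ 1) x = (A *ᵥ h) x / (c * h x) := by
        simp [doobTransform, mulVec, dotProduct, Finset.sum_div]
    _ = 1 := by
        rw [hA]
        exact div_self (mul_ne_zero hc (hh x))

theorem doobTransform_apply_mul (A : Matrix n n K) {h : n → K} {c : K} (hc : c ≠ 0) {x y : n}
    (hx : h x ≠ 0) (hy : h y ≠ 0) : doobTransform A h c x y * (c * h x / h y) = A x y := by
  simp only [doobTransform, of_apply]
  field_simp

theorem pathWeight_doobTransform_mul (A : Fin L → Matrix n n K) {h : Fin L → n → K}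
    {c : Fin L → K} (hc : ∀ l, c l ≠ 0) (hh : ∀ l x, h l x ≠ 0) (xs : Fin (L + 1) → n) :
    pathWeight (fun l => doobTransform (A l) (h l) (c l)) xs *
      ∏ l, c l * h l (xs l.castSucc) / h l (xs l.succ) = pathWeight A xs := by
  simp only [pathWeight, ← Finset.prod_mul_distrib,
    doobTransform_apply_mul _ (hc _) (hh _ _) (hh _ _)]

end Semifield

section RCLike

variable {𝕜 : Type*} [RCLike 𝕜]

theorem ofReal_pathWeight (M : Fin L → Matrix n n ℝ) (xs : Fin (L + 1) → n) :
    ((pathWeight M xs : ℝ) : 𝕜) = pathWeight (fun l => (M l).map RCLike.ofReal) xs :=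
  map_prod (algebraMap ℝ 𝕜) _ _

-- At `z = 0` both sides vanish, whatever value `w / z` is given.
theorem ofReal_norm_sq_mul_div (z w : 𝕜) :
    ((‖z‖ ^ 2 : ℝ) : 𝕜) * (w / z) = conj z * w := by
  rcases eq_or_ne z 0 with rfl | hz
  · simp
  · rw [RCLike.ofReal_pow, ← RCLike.conj_mul, mul_assoc, mul_div_cancel₀ w hz]

theorem ofReal_pathWeight_doobTransform_mul (A : Fin L → Matrix n n ℝ) {h : Fin L → n → ℝ}
    {c : Fin L → ℝ} (hc : ∀ l, c l ≠ 0) (hh : ∀ l x, h l x ≠ 0) (Φ : n → 𝕜)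
    (xs : Fin (L + 1) → n) :
    ((‖Φ (xs 0)‖ ^ 2 * pathWeight (fun l => doobTransform (A l) (h l) (c l)) xs : ℝ) : 𝕜) *
        (Φ (xs (Fin.last L)) / Φ (xs 0) *
          ((∏ l, c l * h l (xs l.castSucc) / h l (xs l.succ) : ℝ) : 𝕜)) =
      conj (Φ (xs 0)) * pathWeight (fun l => (A l).map RCLike.ofReal) xs *
        Φ (xs (Fin.last L)) := by
  rw [RCLike.ofReal_mul, mul_mul_mul_comm, ofReal_norm_sq_mul_div, ← RCLike.ofReal_mul,
    pathWeight_doobTransform_mul A hc hh, ofReal_pathWeight, mul_right_comm]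

theorem mc_path_estimator_normalized_and_unbiased_general [Fintype n] [DecidableEq n]
    (Φ : n → 𝕜) (G : Fin L → Matrix n n ℝ) {φ : Fin L → n → ℝ} {lam : Fin L → ℝ}
    (hφ : ∀ l x, φ l x ≠ 0) (hlam : ∀ l, lam l ≠ 0) (heig : ∀ l, G l *ᵥ φ l = lam l • φ l) :
    (∑ xs : Fin (L + 1) → n,
        ‖Φ (xs 0)‖ ^ 2 * pathWeight (fun l => doobTransform (G l) (φ l) (lam l)) xs =
      ∑ x, ‖Φ x‖ ^ 2) ∧
    (∑ xs : Fin (L + 1) → n,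
        ((‖Φ (xs 0)‖ ^ 2 * pathWeight (fun l => doobTransform (G l) (φ l) (lam l)) xs : ℝ) : 𝕜) *
          (Φ (xs (Fin.last L)) / Φ (xs 0) *
            ((∏ l, lam l * φ l (xs l.castSucc) / φ l (xs l.succ) : ℝ) : 𝕜)) =
      star Φ ⬝ᵥ ((List.ofFn fun l => (G l).map RCLike.ofReal).prod *ᵥ Φ)) := by
  constructor
  · exact sum_mul_pathWeight_of_mulVec_one
      (fun l => doobTransform_mulVec_one (hlam l) (hφ l) (heig l)) fun x => ‖Φ x‖ ^ 2
  · simp only [ofReal_pathWeight_doobTransform_mul G hlam hφ]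
    exact sum_mul_pathWeight_mul _ (star Φ) Φ

end RCLike

end

/-- Normalization and unbiasedness of the Monte Carlo path estimator
(core identities in the proof of Lemma 2.2). -/
theorem mc_path_estimator_normalized_and_unbiased
    (N L : ℕ) (hN : 1 ≤ N) (hL : 1 ≤ L)
    (Φ : Fin N → ℂ)
    (hnorm : ∑ x, ‖Φ x‖ ^ 2 = 1)
    (hne : ∀ x, Φ x ≠ 0)
    (G : Fin L → Matrix (Fin N) (Fin N) ℝ)
    (hsymm : ∀ l, (G l).IsSymm)
    (hnonneg : ∀ l x y, 0 ≤ G l x y)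
    (φ : Fin L → Fin N → ℝ)
    (hφ : ∀ l x, 0 < φ l x)
    (lam : Fin L → ℝ)
    (hlam : ∀ l, 0 < lam l)
    (heig : ∀ l, G l *ᵥ φ l = lam l • φ l) :
    (∑ xs : Fin (L + 1) → Fin N,
        ‖Φ (xs 0)‖ ^ 2 *
          ∏ l : Fin L,
            G l (xs l.castSucc) (xs l.succ) * φ l (xs l.succ) /
              (lam l * φ l (xs l.castSucc)) = 1) ∧
    (∑ xs : Fin (L + 1) → Fin N,
        (↑(‖Φ (xs 0)‖ ^ 2 *
            ∏ l : Fin L,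
              G l (xs l.castSucc) (xs l.succ) * φ l (xs l.succ) /
                (lam l * φ l (xs l.castSucc))) : ℂ) *
          (Φ (xs (Fin.last L)) / Φ (xs 0) *
            (↑(∏ l : Fin L, lam l * φ l (xs l.castSucc) / φ l (xs l.succ)) : ℂ))
      = ∑ x, (starRingEnd ℂ) (Φ x) *
          (((List.ofFn fun l => (G l).map (Complex.ofReal))).prod *ᵥ Φ) x) := by
  rw [← hnorm]
  exact mc_path_estimator_normalized_and_unbiased_general Φ G (fun l x => (hφ l x).ne')
    (fun l => (hlam l).ne') heig
end

section
/- Rank of the noiseless Hankel matrix: Let K, L, S be natural numbers with L ≤ K, S ≤ L+1 and S ≤ K−L+1. Let z : Fin S → ℂ be injective (pairwise distinct poles) and c : Fin S → ℂ with c_j ≠ 0 for all j, and define the signal g(k) = ∑_j c_j · (z_j)^k. Then the Hankel matrix H(g), i.e. the (L+1)×(K−L+1) matrix with entries H(g)_{a,b} = g(a+b), has rank exactly S. -/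
open scoped BigOperators

/-!
The Hankel matrix of `g k = ∑ j, c j * z j ^ k` factors as `Vᵀ * diagonal c * W`, where `V` and `W`
are the rectangular Vandermonde matrices of the poles. The inner dimension of this product is the
number `S` of poles, which bounds the rank from above. The leading `S × S` block of the Hankel
matrix is the same product with square Vandermonde matrices, so its determinant is
`(∏ j, c j) * (vandermonde z).det ^ 2`, which does not vanish.
-/

open Matrix

/-- The `m × n` Hankel matrix of a sequence. The sequence is indexed by all of `ℕ`, so that
Hankel matrices of different sizes share it; only the terms `y 0, …, y (m + n - 2)` occur. -/
def hankelMatrix {α : Type*} (m n : ℕ) (y : ℕ → α) : Matrix (Fin m) (Fin n) α :=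
  of fun a b => y (a + b)

/-- The signal with poles `z j` and coefficients `c j`, that is, the exponential sum
`k ↦ ∑ j, c j * z j ^ k`. -/
def exponentialSum {ι R : Type*} [Fintype ι] [Semiring R] (c z : ι → R) (k : ℕ) : R :=
  ∑ j, c j * z j ^ k

theorem submatrix_castLE_hankelMatrix {α : Type*} {m n p q : ℕ} (hp : p ≤ m) (hq : q ≤ n)
    (y : ℕ → α) :
    (hankelMatrix m n y).submatrix (Fin.castLE hp) (Fin.castLE hq) = hankelMatrix p q y :=
  rfl

theorem rank_hankelMatrix_mono {R : Type*} [CommSemiring R] [StrongRankCondition R]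
    {m n p q : ℕ} (hp : p ≤ m) (hq : q ≤ n) (y : ℕ → R) :
    (hankelMatrix p q y).rank ≤ (hankelMatrix m n y).rank := by
  rw [← submatrix_castLE_hankelMatrix hp hq]
  exact rank_submatrix_le _ _ _

section CommRing

variable {ι R : Type*} [Fintype ι] [CommRing R]

theorem hankelMatrix_exponentialSum [DecidableEq ι] (m n : ℕ) (c z : ι → R) :
    hankelMatrix m n (exponentialSum c z) =
      (rectVandermonde z 1 m)ᵀ * diagonal c * rectVandermonde z 1 n := by
  ext a b
  simp only [hankelMatrix, exponentialSum, of_apply, mul_apply (N := rectVandermonde z 1 n),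
    mul_diagonal, transpose_apply, rectVandermonde_apply, Pi.one_apply, one_pow, mul_one]
  exact Finset.sum_congr rfl fun j _ => by ring

theorem rank_hankelMatrix_exponentialSum_le [Nontrivial R] (m n : ℕ) (c z : ι → R) :
    (hankelMatrix m n (exponentialSum c z)).rank ≤ Fintype.card ι := by
  classical
  rw [hankelMatrix_exponentialSum]
  exact (rank_mul_le_left _ _).trans (rank_le_card_width _)

theorem det_hankelMatrix_exponentialSum {S : ℕ} (c z : Fin S → R) :
    (hankelMatrix S S (exponentialSum c z)).det = (∏ j, c j) * (vandermonde z).det ^ 2 := by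
  rw [hankelMatrix_exponentialSum, ← projVandermonde, ← vandermonde_eq_projVandermonde, det_mul,
    det_mul, det_transpose, det_diagonal]
  ring

end CommRing

theorem hankel_rank_eq_numberOfPoles_general {R : Type*} [CommRing R] [IsDomain R] {m n S : ℕ}
    (hm : S ≤ m) (hn : S ≤ n) {z : Fin S → R} (hz : Function.Injective z)
    {c : Fin S → R} (hc : ∀ j, c j ≠ 0) :
    (hankelMatrix m n (exponentialSum c z)).rank = S := by
  have hdet : (hankelMatrix S S (exponentialSum c z)).det ≠ 0 := by
    rw [det_hankelMatrix_exponentialSum]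
    exact mul_ne_zero (Finset.prod_ne_zero_iff.2 fun j _ => hc j)
      (pow_ne_zero 2 (det_vandermonde_ne_zero_iff.2 hz))
  apply le_antisymm
  · simpa only [Fintype.card_fin] using rank_hankelMatrix_exponentialSum_le m n c z
  · calc
      S = (hankelMatrix S S (exponentialSum c z)).rank := by
        rw [rank_of_det_ne_zero hdet, Fintype.card_fin]
      _ ≤ (hankelMatrix m n (exponentialSum c z)).rank := rank_hankelMatrix_mono hm hn _

/-- Rank of the noiseless Hankel matrix: with `S` pairwise distinct poles and
nonzero coefficients, the Hankel matrix of the signal has rank exactly `S`. -/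
theorem hankel_rank_eq_numberOfPoles
    (K L S : ℕ) (hLK : L ≤ K) (hSL : S ≤ L + 1) (hSKL : S ≤ K - L + 1)
    (z : Fin S → ℂ) (hz : Function.Injective z)
    (c : Fin S → ℂ) (hc : ∀ j, c j ≠ 0) :
    (Matrix.of fun (a : Fin (L + 1)) (b : Fin (K - L + 1)) =>
        ∑ j, c j * z j ^ ((a : ℕ) + (b : ℕ))).rank = S :=
  hankel_rank_eq_numberOfPoles_general hSL hSKL hz hc
end

section
/- Exact recovery from a noiseless signal with K+1 ≥ 2S samples: Let S ≥ 1, let z, z' : Fin S → ℂ both be injective (pairwise distinct poles), and let c, c' : Fin S → ℂ satisfy c_j ≠ 0 and c'_j ≠ 0 for all j. If ∑_j c_j · (z_j)^k = ∑_j c'_j · (z'_j)^k for every k ∈ {0, 1, …, 2S−1}, then there exists a permutation σ of Fin S such that z'_j = z_{σ(j)} and c'_j = c_{σ(j)} for all j. In other words, the poles z_j and coefficients c_j of an S-term noiseless signal are uniquely determined (up to relabeling) by its values at 2S consecutive times k = 0,…,2S−1. -/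
open scoped BigOperators

/-!
Encode the signal `k ↦ ∑ j, c j * z j ^ k` as the finitely supported function taking the value `c j`
at the pole `z j`; the samples of the signal are then the power moments of this function. Two such
functions with the same first `m` moments have a difference whose first `m` moments vanish. If `m`
is at least the number of points supporting the difference, the Vandermonde matrix of these points
forces the difference to be zero. As no coefficient vanishes, the poles are recovered as the support
and the coefficients as the values there.
-/

section AtomicMeasure

variable {ι ι' α M : Type*} [Zero M]

/-- The measure with mass `c i` at the point `z i`, encoded as a finitely supported function. It
records the poles and coefficients of a signal without their labels. -/
noncomputable def atomicMeasure [Finite ι] (z : ι ↪ α) (c : ι → M) : α →₀ M :=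
  (Finsupp.equivFunOnFinite.symm c).embDomain z

theorem atomicMeasure_apply_self [Finite ι] (z : ι ↪ α) (c : ι → M) (i : ι) :
    atomicMeasure z c (z i) = c i :=
  Finsupp.embDomain_apply_self _ _ _

theorem card_support_atomicMeasure_le [Fintype ι] (z : ι ↪ α) (c : ι → M) :
    (atomicMeasure z c).support.card ≤ Fintype.card ι := by
  rw [atomicMeasure, Finsupp.support_embDomain, Finset.card_map]
  exact Finset.card_le_univ _

theorem coe_support_atomicMeasure [Finite ι] (z : ι ↪ α) {c : ι → M} (hc : ∀ i, c i ≠ 0) :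
    ((atomicMeasure z c).support : Set α) = Set.range z := by
  have hsupport : Function.support c = Set.univ := Set.eq_univ_of_forall hc
  simp [atomicMeasure, Finsupp.support_embDomain, hsupport]

theorem exists_equiv_of_atomicMeasure_eq [Finite ι] [Finite ι'] {z : ι ↪ α} {z' : ι' ↪ α}
    {c : ι → M} {c' : ι' → M} (hc : ∀ i, c i ≠ 0) (hc' : ∀ i, c' i ≠ 0)
    (h : atomicMeasure z c = atomicMeasure z' c') :
    ∃ e : ι' ≃ ι, ∀ j, z' j = z (e j) ∧ c' j = c (e j) := by
  have hrange : Set.range z' = Set.range z := by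
    rw [← coe_support_atomicMeasure z hc, ← coe_support_atomicMeasure z' hc', h]
  let e : ι' ≃ ι := (Equiv.ofInjective z' z'.injective).trans <|
    (Equiv.setCongr hrange).trans (Equiv.ofInjective z z.injective).symm
  have hpole (j : ι') : z' j = z (e j) :=
    (Equiv.apply_ofInjective_symm z.injective ⟨z' j, hrange ▸ Set.mem_range_self j⟩).symm
  refine ⟨e, fun j ↦ ⟨hpole j, ?_⟩⟩
  calc
    c' j = atomicMeasure z' c' (z' j) := (atomicMeasure_apply_self z' c' j).symm
    _ = atomicMeasure z c (z (e j)) := by rw [h, hpole]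
    _ = c (e j) := atomicMeasure_apply_self z c (e j)

end AtomicMeasure

section PowerMoment

variable {R : Type*} [Semiring R]

/-- The `k`-th power moment `∑ t, a t * t ^ k` of a finitely supported `a`, as a linear map. The
moments of the atomic measure of a signal are the samples of the signal. -/
noncomputable def powerMoment (k : ℕ) : (R →₀ R) →ₗ[R] R :=
  Finsupp.linearCombination R (· ^ k)

theorem powerMoment_apply (k : ℕ) (a : R →₀ R) :
    powerMoment k a = ∑ t ∈ a.support, a t * t ^ k :=
  Finsupp.linearCombination_apply R a

theorem powerMoment_atomicMeasure {ι : Type*} [Fintype ι] (k : ℕ) (z : ι ↪ R) (c : ι → R) :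
    powerMoment k (atomicMeasure z c) = ∑ i, c i * z i ^ k :=
  calc
    powerMoment k (atomicMeasure z c) = Fintype.linearCombination R (fun i ↦ z i ^ k) c :=
      (Finsupp.linearCombination_embDomain R _ _).trans
        (Finsupp.linearCombination_eq_fintype_linearCombination_apply R _ c)
    _ = ∑ i, c i * z i ^ k := Fintype.linearCombination_apply R _ c

end PowerMoment

section Vandermonde

variable {R : Type*} [CommRing R] [IsDomain R]

theorem eq_zero_of_powerMoment_eq_zero {a : R →₀ R}
    (h : ∀ k < a.support.card, powerMoment k a = 0) : a = 0 := by
  let t : Fin a.support.card → R := fun i ↦ a.support.equivFin.symm i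
  have ht : Function.Injective t := Subtype.val_injective.comp (Equiv.injective _)
  have hat : (fun i ↦ a (t i)) = 0 := by
    refine Matrix.eq_zero_of_forall_pow_sum_mul_pow_eq_zero ht fun k ↦ ?_
    calc
      ∑ i, a (t i) * t i ^ (k : ℕ) = ∑ s : a.support, a s * (s : R) ^ (k : ℕ) :=
        a.support.equivFin.symm.sum_comp fun s : a.support ↦ a s * (s : R) ^ (k : ℕ)
      _ = ∑ s ∈ a.support, a s * s ^ (k : ℕ) :=
        Finset.sum_coe_sort a.support fun s ↦ a s * s ^ (k : ℕ)
      _ = powerMoment k a := (powerMoment_apply k a).symm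
      _ = 0 := h k k.isLt
  by_contra ha
  obtain ⟨s, hs⟩ := Finsupp.support_nonempty_iff.2 ha
  refine Finsupp.mem_support_iff.1 hs ?_
  simpa [t] using congrFun hat (a.support.equivFin ⟨s, hs⟩)

theorem eq_of_powerMoment_eq {a b : R →₀ R}
    (h : ∀ k < a.support.card + b.support.card, powerMoment k a = powerMoment k b) : a = b := by
  classical
  have hcard : (a - b).support.card ≤ a.support.card + b.support.card :=
    (Finset.card_le_card Finsupp.support_sub).trans (Finset.card_union_le _ _)
  refine sub_eq_zero.1 (eq_zero_of_powerMoment_eq_zero fun k hk ↦ ?_)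
  rw [map_sub, h k (hk.trans_le hcard), sub_self]

end Vandermonde

theorem noiseless_signal_exact_recovery_general {R ι ι' : Type*} [CommRing R] [IsDomain R]
    [Fintype ι] [Fintype ι'] {z : ι → R} {z' : ι' → R}
    (hz : Function.Injective z) (hz' : Function.Injective z')
    {c : ι → R} {c' : ι' → R} (hc : ∀ j, c j ≠ 0) (hc' : ∀ j, c' j ≠ 0)
    (h : ∀ k < Fintype.card ι + Fintype.card ι', ∑ j, c j * z j ^ k = ∑ j, c' j * z' j ^ k) :
    ∃ e : ι' ≃ ι, ∀ j, z' j = z (e j) ∧ c' j = c (e j) := by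
  have hmeasure : atomicMeasure ⟨z, hz⟩ c = atomicMeasure ⟨z', hz'⟩ c' := by
    refine eq_of_powerMoment_eq fun k hk ↦ ?_
    rw [powerMoment_atomicMeasure, powerMoment_atomicMeasure]
    exact h k <| hk.trans_le <|
      add_le_add (card_support_atomicMeasure_le _ _) (card_support_atomicMeasure_le _ _)
  exact exists_equiv_of_atomicMeasure_eq hc hc' hmeasure

/-- Exact recovery from a noiseless signal with `2S` samples: the poles and
coefficients of an `S`-term signal are determined up to relabeling by its
values at `k = 0, …, 2S−1`. -/
theorem noiseless_signal_exact_recovery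
    (S : ℕ) (hS : 1 ≤ S)
    (z z' : Fin S → ℂ) (hz : Function.Injective z) (hz' : Function.Injective z')
    (c c' : Fin S → ℂ) (hc : ∀ j, c j ≠ 0) (hc' : ∀ j, c' j ≠ 0)
    (h : ∀ k < 2 * S, ∑ j, c j * z j ^ k = ∑ j, c' j * z' j ^ k) :
    ∃ σ : Equiv.Perm (Fin S), ∀ j, z' j = z (σ j) ∧ c' j = c (σ j) :=
  noiseless_signal_exact_recovery_general hz hz' hc hc' <| by
    simpa only [Fintype.card_fin, ← two_mul] using h
end

section
/- Smallest singular value of the truncated isometry factor (Lemma D.5): Let V be an (L+1)×S complex matrix, let V' be the L×S matrix obtained from V by removing its last row, and let A be an invertible S×S complex matrix such that U := V·A has orthonormal columns, i.e. Uᴴ U = I_S. Set U₀ := V'·A (the matrix obtained from U by removing its last row). Assume there exists s > 0 with ‖V' x‖ ≥ s ‖x‖ for every x ∈ ℂ^S (so V' has full column rank with smallest singular value at least s). Then for every x ∈ ℂ^S, ‖U₀ x‖ ≥ (s / ‖V‖) ‖x‖, where ‖V‖ is the spectral (ℓ²→ℓ²) operator norm of V. -/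
open Matrix
open scoped BigOperators

/-- The spectral (ℓ²→ℓ²) operator norm of a complex matrix. -/
noncomputable def specNorm {m n : ℕ} (A : Matrix (Fin m) (Fin n) ℂ) : ℝ :=
  ‖LinearMap.toContinuousLinearMap (Matrix.toEuclideanLin A)‖

/-- The Euclidean (ℓ²) norm of a complex vector. -/
noncomputable def evnorm {n : ℕ} (v : Fin n → ℂ) : ℝ :=
  Real.sqrt (∑ i, ‖v i‖ ^ 2)

/- Since `V A` is an isometry, `‖x‖ = ‖V (A x)‖ ≤ ‖V‖ ‖A x‖`. So `A` shrinks norms by at most the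
factor `‖V‖`, and the lower bound `s` for `V'`, applied at `A x`, loses at most this factor. -/

section

open scoped Matrix.Norms.L2Operator
open WithLp (toLp)

variable {𝕜 k m n p : Type*} [RCLike 𝕜] [Fintype k] [Fintype m] [Fintype n] [Fintype p]

theorem norm_toLp_mulVec_of_conjTranspose_mul_self_eq_one [DecidableEq n] {U : Matrix m n 𝕜}
    (hU : Uᴴ * U = 1) (x : n → 𝕜) : ‖toLp 2 (U *ᵥ x)‖ = ‖toLp 2 x‖ := by
  have inner_eq : inner 𝕜 (toLp 2 (U *ᵥ x)) (toLp 2 (U *ᵥ x)) =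
      inner 𝕜 (toLp 2 x) (toLp 2 x) := by
    rw [EuclideanSpace.inner_toLp_toLp, EuclideanSpace.inner_toLp_toLp, dotProduct_comm,
      star_mulVec, ← dotProduct_mulVec, mulVec_mulVec, hU, one_mulVec, dotProduct_comm]
  rw [norm_eq_sqrt_re_inner (𝕜 := 𝕜), inner_eq, ← norm_eq_sqrt_re_inner]

theorem norm_toLp_mulVec_div_l2_opNorm_le [DecidableEq n] (M : Matrix m n 𝕜) (x : n → 𝕜) :
    ‖toLp 2 (M *ᵥ x)‖ / ‖M‖ ≤ ‖toLp 2 x‖ :=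
  div_le_of_le_mul₀ (norm_nonneg M) (norm_nonneg _)
    ((M.l2_opNorm_mulVec (toLp 2 x)).trans_eq (mul_comm _ _))

theorem truncated_isometry_smallest_singular_value_general [DecidableEq n] [DecidableEq p]
    {V : Matrix m n 𝕜} {W : Matrix k n 𝕜} {A : Matrix n p 𝕜} (hU : (V * A)ᴴ * (V * A) = 1)
    {s : ℝ} (hW : ∀ y : n → 𝕜, s * ‖toLp 2 y‖ ≤ ‖toLp 2 (W *ᵥ y)‖) (x : p → 𝕜) :
    s / ‖V‖ * ‖toLp 2 x‖ ≤ ‖toLp 2 ((W * A) *ᵥ x)‖ := by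
  obtain hs | hs := le_total s 0
  · exact (mul_nonpos_of_nonpos_of_nonneg (div_nonpos_of_nonpos_of_nonneg hs (norm_nonneg V))
      (norm_nonneg _)).trans (norm_nonneg _)
  calc s / ‖V‖ * ‖toLp 2 x‖
      = s * (‖toLp 2 (V *ᵥ A *ᵥ x)‖ / ‖V‖) := by
        rw [mulVec_mulVec, norm_toLp_mulVec_of_conjTranspose_mul_self_eq_one hU,
          div_mul_eq_mul_div, mul_div_assoc]
    _ ≤ s * ‖toLp 2 (A *ᵥ x)‖ := by
        gcongr
        exact norm_toLp_mulVec_div_l2_opNorm_le V (A *ᵥ x)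
    _ ≤ ‖toLp 2 (W *ᵥ A *ᵥ x)‖ := hW (A *ᵥ x)
    _ = ‖toLp 2 ((W * A) *ᵥ x)‖ := by rw [mulVec_mulVec]

theorem specNorm_eq_l2_opNorm {m n : ℕ} (M : Matrix (Fin m) (Fin n) ℂ) : specNorm M = ‖M‖ := rfl

theorem evnorm_eq_norm_toLp {n : ℕ} (v : Fin n → ℂ) : evnorm v = ‖toLp 2 v‖ :=
  (EuclideanSpace.norm_eq (toLp 2 v)).symm

end

/-- Smallest singular value of the truncated isometry factor (Lemma D.5):
if `U = V·A` has orthonormal columns and `V'` (V with its last row removed) has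
smallest singular value at least `s`, then `U₀ = V'·A` has smallest singular
value at least `s / ‖V‖`. -/
theorem truncated_isometry_smallest_singular_value
    (L S : ℕ)
    (V : Matrix (Fin (L + 1)) (Fin S) ℂ)
    (V' : Matrix (Fin L) (Fin S) ℂ)
    (hV' : ∀ (a : Fin L) (j : Fin S), V' a j = V a.castSucc j)
    (A : Matrix (Fin S) (Fin S) ℂ) (hA : IsUnit A)
    (hU : (V * A)ᴴ * (V * A) = 1)
    (s : ℝ) (hs : 0 < s)
    (hσ : ∀ x : Fin S → ℂ, s * evnorm x ≤ evnorm (V' *ᵥ x)) :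
    ∀ x : Fin S → ℂ, s / specNorm V * evnorm x ≤ evnorm ((V' * A) *ᵥ x) := by
  simp only [evnorm_eq_norm_toLp, specNorm_eq_l2_opNorm] at hσ ⊢
  exact truncated_isometry_smallest_singular_value_general hU hσ
end

section
/- Frobenius-norm comparison of singular subspaces via canonical angles (the computational core of Lemma D.2): Let L+1 ≥ S and let U_S and Ũ_S be (L+1)×S complex matrices with orthonormal columns (U_Sᴴ U_S = I_S and Ũ_Sᴴ Ũ_S = I_S). Let U_S^⊥ be an (L+1)×(L+1−S) complex matrix satisfying (U_S^⊥)ᴴ U_S^⊥ = I_{L+1−S}, (U_S^⊥)ᴴ U_S = 0, and U_S U_Sᴴ + U_S^⊥ (U_S^⊥)ᴴ = I_{L+1}. Let O₁, O₂ be S×S unitary matrices and D an S×S real diagonal matrix with diagonal entries in [0,1] such that O₁ U_Sᴴ Ũ_S O₂ = D. Then ‖U_S (O₂ O₁)ᴴ − Ũ_S‖_F ≤ √2 · ‖(U_S^⊥)ᴴ Ũ_S‖_F. -/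
open Matrix
open scoped BigOperators

/-- The Frobenius norm of a complex matrix. -/
noncomputable def frobNorm {m n : ℕ} (A : Matrix (Fin m) (Fin n) ℂ) : ℝ :=
  Real.sqrt (∑ a, ∑ b, ‖A a b‖ ^ 2)

/-!
Write `V` for `Ut`, `P` for `Uperp`, and put `A = U * Qᴴ` with `Q = O₂ * O₁`. The matrix
`D = Aᴴ * V` is unitarily similar to `diagonal d`, hence positive semidefinite: `Q` aligns `U` with
`V` as in a polar decomposition of `Uᴴ * V`. The resolution of the identity `A * Aᴴ + P * Pᴴ = 1`
makes `A` a contraction and gives `(Pᴴ * V)ᴴ * (Pᴴ * V) = 1 - D * D`. Since `0 ≤ D` and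
`D * D ≤ 1` force `D * D ≤ D`, the Loewner order gives
`(A - V)ᴴ * (A - V) = Aᴴ * A + 1 - 2 • D ≤ 2 • (1 - D) ≤ 2 • (1 - D * D)`, and the Frobenius bound
follows by taking traces.
-/

section StarOrderedRing

variable {R : Type*} [Ring R] [PartialOrder R] [StarRing R] [StarOrderedRing R]

-- The factor `2` clears the coefficient `1/2` of the certificate, so `R` need not contain `1/2`.
theorem two_nsmul_mul_self_le_of_nonneg_of_mul_self_le_one {a : R} (ha : 0 ≤ a)
    (ha_sq : a * a ≤ 1) : 2 • (a * a) ≤ 2 • a := by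
  have ha_sa : IsSelfAdjoint a := ha.isSelfAdjoint
  have hb_sa : IsSelfAdjoint (1 - a) := (IsSelfAdjoint.one R).sub ha_sa
  have hab_sa : IsSelfAdjoint (a * (1 - a)) :=
    (ha_sa.commute_iff hb_sa).1 ((Commute.one_right a).sub_right (Commute.refl a))
  have h_conj : 0 ≤ (1 - a) * a * (1 - a) := hb_sa.conjugate_nonneg ha
  have h_square : 0 ≤ a * (1 - a) * (a * (1 - a)) := hab_sa.mul_self_nonneg
  have h_gap : 0 ≤ a * (1 - a * a) * a := ha_sa.conjugate_nonneg (sub_nonneg.2 ha_sq)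
  rw [← sub_nonneg]
  calc 0 ≤ 2 • ((1 - a) * a * (1 - a)) + a * (1 - a) * (a * (1 - a)) + a * (1 - a * a) * a :=
        add_nonneg (add_nonneg (nsmul_nonneg h_conj 2) h_square) h_gap
    _ = 2 • a - 2 • (a * a) := by noncomm_ring

end StarOrderedRing

theorem conjTranspose_mul_self_eq_add_of_mul_conjTranspose_add_eq_one {R l m n k : Type*}
    [Semiring R] [StarRing R] [Fintype m] [Fintype n] [Fintype k] [DecidableEq m]
    {A : Matrix m n R} {P : Matrix m k R} (hAP : A * Aᴴ + P * Pᴴ = 1) (V : Matrix m l R) :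
    Vᴴ * V = (Aᴴ * V)ᴴ * (Aᴴ * V) + (Pᴴ * V)ᴴ * (Pᴴ * V) := by
  calc Vᴴ * V = Vᴴ * (A * Aᴴ + P * Pᴴ) * V := by rw [hAP, Matrix.mul_one]
    _ = (Aᴴ * V)ᴴ * (Aᴴ * V) + (Pᴴ * V)ᴴ * (Pᴴ * V) := by
        simp only [conjTranspose_mul, conjTranspose_conjTranspose, Matrix.mul_add, Matrix.add_mul,
          Matrix.mul_assoc]

section MatrixComparison

open scoped ComplexOrder MatrixOrder Matrix.Norms.Frobenius

variable {𝕜 m n k : Type*} [RCLike 𝕜] [Fintype m] [Fintype n] [Fintype k]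

theorem conjTranspose_mul_self_le_one_of_self_mul_conjTranspose_le_one [DecidableEq m]
    [DecidableEq n] {A : Matrix m n 𝕜} (hA : A * Aᴴ ≤ 1) : Aᴴ * A ≤ 1 := by
  have h_sq : ((1 - Aᴴ * A)ᴴ * (1 - Aᴴ * A)).PosSemidef := posSemidef_conjTranspose_mul_self _
  have h_conj : (Aᴴ * (1 - A * Aᴴ) * A).PosSemidef := (le_iff.1 hA).conjTranspose_mul_mul_same A
  have h_sum : (1 - Aᴴ * A)ᴴ * (1 - Aᴴ * A) + Aᴴ * (1 - A * Aᴴ) * A = 1 - Aᴴ * A := by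
    simp only [conjTranspose_sub, conjTranspose_one, conjTranspose_mul,
      conjTranspose_conjTranspose, Matrix.sub_mul, Matrix.mul_sub, Matrix.one_mul, Matrix.mul_one,
      Matrix.mul_assoc]
    abel
  exact le_iff.2 (h_sum ▸ h_sq.add h_conj)

theorem conjTranspose_mul_self_sub_le_of_posSemidef [DecidableEq m] [DecidableEq n]
    {A V : Matrix m n 𝕜} {P : Matrix m k 𝕜} (hV : Vᴴ * V = 1) (hAP : A * Aᴴ + P * Pᴴ = 1)
    (hAV : (Aᴴ * V).PosSemidef) :
    (A - V)ᴴ * (A - V) ≤ 2 • ((Pᴴ * V)ᴴ * (Pᴴ * V)) := by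
  set D := Aᴴ * V with hD
  have hVA : Vᴴ * A = D := by
    rw [← hAV.isHermitian.eq, hD, conjTranspose_mul, conjTranspose_conjTranspose]
  have hA : Aᴴ * A ≤ 1 := conjTranspose_mul_self_le_one_of_self_mul_conjTranspose_le_one <| by
    rw [← hAP]
    exact le_add_of_nonneg_right (posSemidef_self_mul_conjTranspose P).nonneg
  have hDP : D * D + (Pᴴ * V)ᴴ * (Pᴴ * V) = 1 := by
    rw [← hV, conjTranspose_mul_self_eq_add_of_mul_conjTranspose_add_eq_one hAP V, ← hD,
      hAV.isHermitian.eq]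
  have hD_sq : D * D ≤ 1 := by
    rw [← hDP]
    exact le_add_of_nonneg_right (posSemidef_conjTranspose_mul_self _).nonneg
  calc (A - V)ᴴ * (A - V) = Aᴴ * A + 1 - 2 • D := by
        rw [conjTranspose_sub, Matrix.sub_mul, Matrix.mul_sub, Matrix.mul_sub, hV, hVA, ← hD]
        abel
    _ ≤ 1 + 1 - 2 • D := by gcongr
    _ ≤ 1 + 1 - 2 • (D * D) := by
        gcongr 1 + 1 - ?_
        exact two_nsmul_mul_self_le_of_nonneg_of_mul_self_le_one hAV.nonneg hD_sq
    _ = 2 • ((Pᴴ * V)ᴴ * (Pᴴ * V)) := by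
        rw [eq_sub_of_add_eq' hDP]
        abel

theorem frobenius_norm_sq_eq_re_trace (A : Matrix m n 𝕜) :
    ‖A‖ ^ 2 = RCLike.re (Aᴴ * A).trace := by
  rw [frobenius_norm_def, ← Real.sqrt_eq_rpow, Real.sq_sqrt (by positivity), Finset.sum_comm]
  simp only [trace, diag_apply, Matrix.mul_apply, conjTranspose_apply, RCLike.star_def,
    RCLike.conj_mul, ← RCLike.ofReal_pow, map_sum, RCLike.ofReal_re, Real.rpow_two]

theorem frobenius_norm_le_sqrt_mul_of_conjTranspose_mul_self_le_smul {A : Matrix m n 𝕜}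
    {B : Matrix k n 𝕜} {c : ℝ} (hAB : Aᴴ * A ≤ c • (Bᴴ * B)) : ‖A‖ ≤ √c * ‖B‖ := by
  have h_trace : 0 ≤ RCLike.re (c • (Bᴴ * B) - Aᴴ * A).trace :=
    (RCLike.nonneg_iff.1 (le_iff.1 hAB).trace_nonneg).1
  have h_sq : ‖A‖ ^ 2 ≤ c * ‖B‖ ^ 2 := by
    rwa [trace_sub, trace_smul, map_sub, RCLike.smul_re, ← frobenius_norm_sq_eq_re_trace,
      ← frobenius_norm_sq_eq_re_trace, sub_nonneg] at h_trace
  calc ‖A‖ ≤ √(c * ‖B‖ ^ 2) := Real.le_sqrt_of_sq_le h_sq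
    _ = √c * ‖B‖ := by rw [Real.sqrt_mul' _ (sq_nonneg _), Real.sqrt_sq (norm_nonneg _)]

theorem posSemidef_diagonal_ofReal {ι : Type*} [DecidableEq ι] {d : ι → ℝ} (hd : ∀ i, 0 ≤ d i) :
    (diagonal fun i => (d i : 𝕜)).PosSemidef :=
  .diagonal fun i => RCLike.ofReal_nonneg.2 (hd i)

theorem posSemidef_mul_comm_of_mem_unitaryGroup [DecidableEq n] {W N : Matrix n n 𝕜}
    (hW : W ∈ unitaryGroup n 𝕜) (hNW : (N * W).PosSemidef) : (W * N).PosSemidef := by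
  have h := hNW.mul_mul_conjTranspose_same W
  rwa [← Matrix.mul_assoc, Matrix.mul_assoc (W * N), ← star_eq_conjTranspose,
    mem_unitaryGroup_iff.1 hW, Matrix.mul_one] at h

theorem singular_subspace_frobenius_comparison_general [DecidableEq m] [DecidableEq n]
    {U V : Matrix m n 𝕜} {P : Matrix m k 𝕜} (hV : Vᴴ * V = 1) (hUP : U * Uᴴ + P * Pᴴ = 1)
    {Q : Matrix n n 𝕜} (hQ : Q ∈ unitaryGroup n 𝕜) (hQUV : (Q * (Uᴴ * V)).PosSemidef) :
    ‖U * Qᴴ - V‖ ≤ √2 * ‖Pᴴ * V‖ := by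
  have hQP : U * Qᴴ * (U * Qᴴ)ᴴ + P * Pᴴ = 1 := by
    rw [conjTranspose_mul, conjTranspose_conjTranspose, Matrix.mul_assoc, ← Matrix.mul_assoc Qᴴ,
      ← star_eq_conjTranspose Q, mem_unitaryGroup_iff'.1 hQ, Matrix.one_mul, hUP]
  have hQV : ((U * Qᴴ)ᴴ * V).PosSemidef := by
    rwa [conjTranspose_mul, conjTranspose_conjTranspose, Matrix.mul_assoc]
  refine frobenius_norm_le_sqrt_mul_of_conjTranspose_mul_self_le_smul ?_
  rw [ofNat_smul_eq_nsmul]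
  exact conjTranspose_mul_self_sub_le_of_posSemidef hV hQP hQV

theorem frobNorm_eq_norm {m n : ℕ} (A : Matrix (Fin m) (Fin n) ℂ) : frobNorm A = ‖A‖ := by
  simp only [frobNorm, frobenius_norm_def, Real.sqrt_eq_rpow, Real.rpow_two]

end MatrixComparison

/-- Frobenius-norm comparison of singular subspaces via canonical angles
(the computational core of Lemma D.2). -/
theorem singular_subspace_frobenius_comparison
    (L S : ℕ) (hS : S ≤ L + 1)
    (U Ut : Matrix (Fin (L + 1)) (Fin S) ℂ)
    (hU : Uᴴ * U = 1) (hUt : Utᴴ * Ut = 1)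
    (Uperp : Matrix (Fin (L + 1)) (Fin (L + 1 - S)) ℂ)
    (hUperp1 : Uperpᴴ * Uperp = 1)
    (hUperp2 : Uperpᴴ * U = 0)
    (hUperp3 : U * Uᴴ + Uperp * Uperpᴴ = 1)
    (O₁ O₂ : Matrix (Fin S) (Fin S) ℂ)
    (hO₁ : O₁ ∈ Matrix.unitaryGroup (Fin S) ℂ)
    (hO₂ : O₂ ∈ Matrix.unitaryGroup (Fin S) ℂ)
    (d : Fin S → ℝ) (hd0 : ∀ i, 0 ≤ d i) (hd1 : ∀ i, d i ≤ 1)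
    (hD : O₁ * Uᴴ * Ut * O₂ = Matrix.diagonal fun i => (d i : ℂ)) :
    frobNorm (U * (O₂ * O₁)ᴴ - Ut) ≤ Real.sqrt 2 * frobNorm (Uperpᴴ * Ut) := by
  have hpos := posSemidef_mul_comm_of_mem_unitaryGroup hO₂ (hD ▸ posSemidef_diagonal_ofReal hd0)
  simpa only [frobNorm_eq_norm] using singular_subspace_frobenius_comparison_general
    hUt hUperp3 (mul_mem hO₂ hO₁) (by simpa only [Matrix.mul_assoc] using hpos)
end

section
/- Lower bound on the smallest singular value of the rectangular Vandermonde matrix of a gapped decaying signal (combining Lemma D.7, Theorem D.6 and the gap bound in the proof of Theorem 7): Let S ≥ 1, T ≥ 1 be integers and 0 < Δ ≤ 1. Let E : Fin S → ℝ satisfy 0 ≤ E_i < 2π for all i and |E_i − E_j| ≥ 2πΔ for all i ≠ j. Set z_i = exp(−E_i) and let V be the (S·T)×S rectangular Vandermonde matrix with entries V_{a,i} = (z_i)^a for a ∈ {0,…,S·T−1}. Then for every x : Fin S → ℝ, ‖V x‖ ≥ (1/(2√S)) · (π Δ exp(−2π))^{S−1} · ‖x‖, where the norms are Euclidean (ℓ²)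 norms. -/
/-!
Let `W` be the matrix with entries `W i a = z i ^ a`. It sends the coefficient vector of a
polynomial `p` to the values `p (z i)`, so `∑ i, x i * p (z i)` is the pairing of `x ᵥ* W` with the
coefficients of `p`. Taking for `p` the nodal polynomial of all nodes but `z i` isolates
`x i * p (z i)`: here `p (z i)` is a product of node gaps, hence not small, while the coefficients
of `p` sum in norm to at most `(1 + r) ^ (n - 1)` when the `n` nodes have norm at most `r`. This
bounds `x` by `x ᵥ* W` in sup norm, and comparing sup and Euclidean norms costs a factor `√n`.
-/

open Matrix
open scoped BigOperators

section Nodal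

open Polynomial Lagrange

variable {ι K : Type*} [NormedField K] {s : Finset ι} {z : ι → K} {r : ℝ}

lemma norm_coeff_nodal_le (hz : ∀ i ∈ s, ‖z i‖ ≤ r) (k : ℕ) :
    ‖(nodal s z).coeff k‖ ≤ r ^ (s.card - k) * s.card.choose k := by
  have hsplits : (nodal s z).Splits := Splits.prod fun i _ ↦ Splits.X_sub_C (z i)
  have hroots : ∀ w ∈ (nodal s z).roots, ‖w‖ ≤ r := by
    intro w hw
    obtain ⟨i, hi, hwi⟩ : ∃ i ∈ s, w - z i = 0 := by
      rw [← Finset.prod_eq_zero_iff, ← eval_nodal]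
      exact (mem_roots'.1 hw).2
    exact sub_eq_zero.1 hwi ▸ hz i hi
  simpa only [Polynomial.map_id, natDegree_nodal] using
    coeff_le_of_roots_le (f := RingHom.id K) k (nodal_monic (s := s) (v := z))
      (by rwa [Polynomial.map_id]) (by rwa [Polynomial.map_id])

lemma sum_norm_coeff_nodal_le (hz : ∀ i ∈ s, ‖z i‖ ≤ r) {N : ℕ} (hN : s.card < N) :
    ∑ a : Fin N, ‖(nodal s z).coeff a‖ ≤ (1 + r) ^ s.card := by
  have hcoeff : ∀ a ∈ Finset.range N, a ∉ Finset.range (s.card + 1) →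
      ‖(nodal s z).coeff a‖ = 0 := by
    intro a _ ha
    rw [coeff_eq_zero_of_natDegree_lt, norm_zero]
    rw [natDegree_nodal]
    simpa using ha
  calc ∑ a : Fin N, ‖(nodal s z).coeff a‖
      = ∑ a ∈ Finset.range N, ‖(nodal s z).coeff a‖ :=
        Fin.sum_univ_eq_sum_range (fun a ↦ ‖(nodal s z).coeff a‖) N
    _ = ∑ a ∈ Finset.range (s.card + 1), ‖(nodal s z).coeff a‖ :=
        (Finset.sum_subset (Finset.range_mono hN) hcoeff).symm
    _ ≤ ∑ a ∈ Finset.range (s.card + 1), r ^ (s.card - a) * s.card.choose a :=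
        Finset.sum_le_sum fun a _ ↦ norm_coeff_nodal_le hz a
    _ = (1 + r) ^ s.card := by simp only [add_pow, one_pow, one_mul]

end Nodal

section RectVandermonde

open Polynomial Lagrange

lemma rectVandermonde_mulVec_coeff {ι R : Type*} [CommRing R] (z : ι → R) {p : R[X]} {N : ℕ}
    (hp : p.natDegree < N) :
    (rectVandermonde z 1 N *ᵥ fun a ↦ p.coeff a) = fun i ↦ p.eval (z i) := by
  ext i
  simp only [mulVec, dotProduct, rectVandermonde_apply, Pi.one_apply, one_pow, mul_one]
  rw [eval_eq_sum_range' hp, ← Fin.sum_univ_eq_sum_range (fun a ↦ p.coeff a * z i ^ a)]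
  exact Finset.sum_congr rfl fun a _ ↦ mul_comm _ _

lemma norm_dotProduct_le_sum_norm_mul_norm {m R : Type*} [Fintype m]
    [NonUnitalSeminormedRing R] (v w : m → R) : ‖v ⬝ᵥ w‖ ≤ (∑ a, ‖w a‖) * ‖v‖ := by
  rw [Finset.sum_mul]
  refine norm_sum_le_of_le _ fun a _ ↦ (norm_mul_le _ _).trans ?_
  rw [mul_comm]
  gcongr
  exact norm_le_pi_norm v a

variable {ι K : Type*} [Fintype ι] [NormedField K] {z : ι → K} {r : ℝ} {N : ℕ}

lemma norm_mul_prod_norm_sub_le_norm_vecMul_rectVandermonde [DecidableEq ι]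
    (hN : Fintype.card ι ≤ N) (hz : ∀ i, ‖z i‖ ≤ r) (x : ι → K) (i : ι) :
    ‖x i‖ * ∏ j ∈ Finset.univ.erase i, ‖z i - z j‖
      ≤ (1 + r) ^ (Fintype.card ι - 1) * ‖x ᵥ* rectVandermonde z 1 N‖ := by
  set p := nodal (Finset.univ.erase i) z
  have hcard : (Finset.univ.erase i).card = Fintype.card ι - 1 :=
    Finset.card_erase_of_mem (Finset.mem_univ i)
  have hlt : (Finset.univ.erase i).card < N :=
    (Finset.card_erase_lt_of_mem (Finset.mem_univ i)).trans_le hN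
  have hisolate : (x ⬝ᵥ fun j ↦ p.eval (z j)) = x i * p.eval (z i) := by
    refine Finset.sum_eq_single i (fun j _ hj ↦ ?_) (by simp)
    exact mul_eq_zero_of_right _ (eval_nodal_at_node (Finset.mem_erase.2 ⟨hj, Finset.mem_univ j⟩))
  calc ‖x i‖ * ∏ j ∈ Finset.univ.erase i, ‖z i - z j‖
      = ‖x i * p.eval (z i)‖ := by rw [eval_nodal, norm_mul, norm_prod]
    _ = ‖(x ᵥ* rectVandermonde z 1 N) ⬝ᵥ fun a ↦ p.coeff a‖ := by
        rw [← dotProduct_mulVec, rectVandermonde_mulVec_coeff z (natDegree_nodal.trans_lt hlt),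
          hisolate]
    _ ≤ (∑ a : Fin N, ‖p.coeff a‖) * ‖x ᵥ* rectVandermonde z 1 N‖ :=
        norm_dotProduct_le_sum_norm_mul_norm _ _
    _ ≤ (1 + r) ^ (Fintype.card ι - 1) * ‖x ᵥ* rectVandermonde z 1 N‖ := by
        rw [← hcard]
        gcongr
        exact sum_norm_coeff_nodal_le (fun j _ ↦ hz j) hlt

theorem pow_mul_norm_le_norm_vecMul_rectVandermonde (hN : Fintype.card ι ≤ N)
    (hz : ∀ i, ‖z i‖ ≤ r) {δ : ℝ} (hδ : 0 ≤ δ) (hsep : Pairwise fun i j ↦ δ ≤ ‖z i - z j‖)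
    (x : ι → K) :
    (δ / (1 + r)) ^ (Fintype.card ι - 1) * ‖x‖ ≤ ‖x ᵥ* rectVandermonde z 1 N‖ := by
  classical
  cases isEmpty_or_nonempty ι
  · simp [Subsingleton.elim x 0]
  obtain ⟨⟨i, hi⟩, -⟩ := IsGreatest.pi_norm x
  have hr : 0 < 1 + r := by linarith [norm_nonneg (z i), hz i]
  have hprod : δ ^ (Fintype.card ι - 1) ≤ ∏ j ∈ Finset.univ.erase i, ‖z i - z j‖ := by
    rw [← Finset.card_univ, ← Finset.card_erase_of_mem (Finset.mem_univ i), ← Finset.prod_const]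
    exact Finset.prod_le_prod (fun _ _ ↦ hδ) fun j hj ↦ hsep (Finset.ne_of_mem_erase hj).symm
  rw [div_pow, div_mul_eq_mul_div, div_le_iff₀' (pow_pos hr _)]
  calc δ ^ (Fintype.card ι - 1) * ‖x‖
      ≤ ‖x i‖ * ∏ j ∈ Finset.univ.erase i, ‖z i - z j‖ := by
        rw [mul_comm, ← hi]
        gcongr
    _ ≤ (1 + r) ^ (Fintype.card ι - 1) * ‖x ᵥ* rectVandermonde z 1 N‖ :=
        norm_mul_prod_norm_sub_le_norm_vecMul_rectVandermonde hN hz x i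

end RectVandermonde

section EuclideanNorm

variable {ι : Type*} [Fintype ι] (x : ι → ℝ)

lemma pi_norm_le_sqrt_sum_sq : ‖x‖ ≤ √(∑ i, x i ^ 2) :=
  (pi_norm_le_iff_of_nonneg (Real.sqrt_nonneg _)).2 fun i ↦
    Real.abs_le_sqrt <| Finset.single_le_sum (f := fun j ↦ x j ^ 2) (fun j _ ↦ sq_nonneg (x j))
      (Finset.mem_univ i)

lemma sqrt_sum_sq_le_sqrt_card_mul_pi_norm :
    √(∑ i, x i ^ 2) ≤ √(Fintype.card ι) * ‖x‖ := by
  rw [← Real.sqrt_sq (norm_nonneg x), ← Real.sqrt_mul (Nat.cast_nonneg _), ← nsmul_eq_mul]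
  refine Real.sqrt_le_sqrt (Finset.sum_le_card_nsmul _ _ _ fun i _ ↦ ?_)
  exact sq_le_sq' (neg_le_of_abs_le (norm_le_pi_norm x i)) (le_of_abs_le (norm_le_pi_norm x i))

end EuclideanNorm

lemma exp_mul_abs_sub_le_abs_exp_sub_exp {L x y : ℝ} (hx : L ≤ x) (hy : L ≤ y) :
    Real.exp L * |x - y| ≤ |Real.exp x - Real.exp y| := by
  wlog hyx : y ≤ x generalizing x y
  · rw [abs_sub_comm x, abs_sub_comm (Real.exp x)]
    exact this hy hx (le_of_not_ge hyx)
  rw [abs_of_nonneg (sub_nonneg.2 hyx), abs_of_nonneg (sub_nonneg.2 (Real.exp_le_exp.2 hyx))]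
  calc Real.exp L * (x - y)
      ≤ Real.exp y * (Real.exp (x - y) - 1) := by
        refine mul_le_mul (Real.exp_le_exp.2 hy) ?_ (sub_nonneg.2 hyx) (Real.exp_pos y).le
        linarith [Real.add_one_le_exp (x - y)]
    _ = Real.exp x - Real.exp y := by rw [mul_sub, ← Real.exp_add, add_sub_cancel, mul_one]

theorem gapped_vandermonde_smallest_singular_value_lower_bound_general
    {ι : Type*} [Fintype ι] {N : ℕ} (hN : Fintype.card ι ≤ N) {A B g : ℝ} (hg : 0 ≤ g)
    {E : ι → ℝ} (hA : ∀ i, A ≤ E i) (hB : ∀ i, E i ≤ B)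
    (hgap : Pairwise fun i j ↦ g ≤ |E i - E j|) {V : Matrix (Fin N) ι ℝ}
    (hV : ∀ a i, V a i = Real.exp (-E i) ^ (a : ℕ)) (x : ι → ℝ) :
    (g * Real.exp (-B) / (1 + Real.exp (-A))) ^ (Fintype.card ι - 1) * √(∑ i, x i ^ 2)
      ≤ √(Fintype.card ι) * √(∑ a, (V *ᵥ x) a ^ 2) := by
  set z : ι → ℝ := fun i ↦ Real.exp (-E i)
  have hVz : V *ᵥ x = x ᵥ* rectVandermonde z 1 N := by
    rw [← mulVec_transpose]
    congr 1
    ext a i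
    simp [hV, rectVandermonde_apply, z]
  have hz : ∀ i, ‖z i‖ ≤ Real.exp (-A) := fun i ↦ by
    simpa [z] using hA i
  have hsep : Pairwise fun i j ↦ g * Real.exp (-B) ≤ ‖z i - z j‖ := fun i j hij ↦ by
    calc g * Real.exp (-B) ≤ Real.exp (-B) * |-E i - -E j| := by
          rw [mul_comm, neg_sub_neg, abs_sub_comm]
          gcongr
          exact hgap hij
      _ ≤ ‖z i - z j‖ :=
          exp_mul_abs_sub_le_abs_exp_sub_exp (neg_le_neg (hB i)) (neg_le_neg (hB j))
  set c := (g * Real.exp (-B) / (1 + Real.exp (-A))) ^ (Fintype.card ι - 1)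
  calc c * √(∑ i, x i ^ 2)
      ≤ c * (√(Fintype.card ι) * ‖x‖) := by
        gcongr
        exact sqrt_sum_sq_le_sqrt_card_mul_pi_norm x
    _ = √(Fintype.card ι) * (c * ‖x‖) := mul_left_comm _ _ _
    _ ≤ √(Fintype.card ι) * ‖V *ᵥ x‖ := by
        gcongr
        exact hVz ▸ pow_mul_norm_le_norm_vecMul_rectVandermonde hN hz (by positivity) hsep x
    _ ≤ √(Fintype.card ι) * √(∑ a, (V *ᵥ x) a ^ 2) := by
        gcongr
        exact pi_norm_le_sqrt_sum_sq _

/-- Lower bound on the smallest singular value of the rectangular Vandermonde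
matrix of a gapped decaying signal (combining Lemma D.7, Theorem D.6 and the
gap bound in the proof of Theorem 7). -/
theorem gapped_vandermonde_smallest_singular_value_lower_bound
    (S T : ℕ) (hS : 1 ≤ S) (hT : 1 ≤ T)
    (Δ : ℝ) (hΔ0 : 0 < Δ) (hΔ1 : Δ ≤ 1)
    (E : Fin S → ℝ) (hE0 : ∀ i, 0 ≤ E i) (hE2π : ∀ i, E i < 2 * Real.pi)
    (hgap : ∀ i j, i ≠ j → 2 * Real.pi * Δ ≤ |E i - E j|)
    (V : Matrix (Fin (S * T)) (Fin S) ℝ)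
    (hV : ∀ (a : Fin (S * T)) (i : Fin S), V a i = Real.exp (-E i) ^ (a : ℕ)) :
    ∀ x : Fin S → ℝ,
      1 / (2 * Real.sqrt S) * (Real.pi * Δ * Real.exp (-(2 * Real.pi))) ^ (S - 1) *
          Real.sqrt (∑ i, x i ^ 2)
        ≤ Real.sqrt (∑ a, (V *ᵥ x) a ^ 2) := by
  intro x
  have hbound := gapped_vandermonde_smallest_singular_value_lower_bound_general
    (by simpa using Nat.le_mul_of_pos_right S hT) (by positivity) hE0 (fun i ↦ (hE2π i).le)
    hgap hV x
  have hbase : 2 * Real.pi * Δ * Real.exp (-(2 * Real.pi)) / (1 + Real.exp (-0))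
      = Real.pi * Δ * Real.exp (-(2 * Real.pi)) := by
    rw [neg_zero, Real.exp_zero]
    ring
  rw [hbase, Fintype.card_fin] at hbound
  have hS0 : 0 < √(S : ℝ) := Real.sqrt_pos.2 (by exact_mod_cast hS)
  rw [mul_assoc, one_div_mul_eq_div, div_le_iff₀' (by positivity)]
  exact hbound.trans (by gcongr; linarith)
end
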